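/- arXiv:gr-qc/0601124 — 4 statements merged into one kernel-verified Lean document; each statement's English description precedes it below -/
import Mathlib

section
/- Let X be a reflexive real Banach space, let L : X → X* be a bounded linear operator which is coercive (there exists δ > 0 with (L u)(u) ≥ δ‖u‖² for all u ∈ X), let K : X → X* be a compact linear operator, and set M = L + K. Define Mᵗ : X → X* by (Mᵗ u)(v) = (M v)(u) for all u, v ∈ X. Then the range of M equals the annihilator of ker Mᵗ, i.e. Ran M = {ω ∈ X* : ω(u) = 0 for all u ∈ ker Mᵗ}. -/
open Filter Topology in
theorem closed_range_aux {X Y : Type*} [NormedAddCommGroup X] [NormedSpace ℝ X] [CompleteSpace X]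
    [NormedAddCommGroup Y] [NormedSpace ℝ Y]
    (L K M : X →L[ℝ] Y) (c : ℝ) (hc : 0 < c) (hL : ∀ u, c * ‖u‖ ≤ ‖L u‖)
    (hK : IsCompactOperator (⇑K)) (hM : M = L + K) : IsClosed (Set.range (⇑M)) := by
  have hLe : IsClosedEmbedding (⇑L) := by
    obtain ⟨k, hk⟩ := (antilipschitzWith_iff_exists_mul_le_norm (f := L)).2 ⟨c, hc, hL⟩
    exact hk.isClosedEmbedding L.uniformContinuous
  let N : Submodule ℝ X := M.ker
  let f : X ⧸ N →L[ℝ] Y := N.liftQL M le_rfl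
  have hf : ∀ x : X, f (Submodule.Quotient.mk x) = M x := fun x => rfl
  have hrange : Set.range (⇑M) = Set.range (⇑f) := by
    ext y
    constructor
    · rintro ⟨x, rfl⟩
      exact ⟨Submodule.Quotient.mk x, hf x⟩
    · rintro ⟨q, rfl⟩
      obtain ⟨x, rfl⟩ := Submodule.Quotient.mk_surjective N q
      exact ⟨x, (hf x).symm⟩
  rw [hrange]
  suffices h : ∃ k, AntilipschitzWith k f by
    obtain ⟨k, hk⟩ := h
    exact hk.isClosed_range f.uniformContinuous
  rw [antilipschitzWith_iff_exists_mul_le_norm]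
  by_contra! h
  have key : ∀ n : ℕ, ∃ v : X, ‖v‖ ≤ 2 ∧ ‖(Submodule.Quotient.mk v : X ⧸ N)‖ = 1 ∧
      ‖M v‖ ≤ 1 / ((n : ℝ) + 1) := by
    intro n
    obtain ⟨q, hq⟩ := h (1 / ((n : ℝ) + 1)) (by positivity)
    have hq0 : 0 < ‖q‖ := by
      by_contra h0
      have h1 : ‖q‖ = 0 := le_antisymm (not_lt.1 h0) (norm_nonneg _)
      rw [h1, mul_zero] at hq
      exact absurd hq (not_lt.2 (norm_nonneg _))
    obtain ⟨w, rfl, hw⟩ := Submodule.Quotient.norm_mk_lt q hq0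
    rw [hf] at hq
    refine ⟨‖(Submodule.Quotient.mk w : X ⧸ N)‖⁻¹ • w, ?_, ?_, ?_⟩
    · rw [norm_smul, norm_inv, norm_norm, inv_mul_le_iff₀ hq0]
      linarith
    · rw [Submodule.Quotient.mk_smul, norm_smul, norm_inv, norm_norm, inv_mul_cancel₀ hq0.ne']
    · rw [map_smul, norm_smul, norm_inv, norm_norm, inv_mul_le_iff₀ hq0]
      linarith
  choose v hv2 hv1 hvM using key
  have hMlim : Tendsto (fun n => M (v n)) atTop (𝓝 0) :=
    squeeze_zero_norm hvM tendsto_one_div_add_atTop_nhds_zero_nat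
  obtain ⟨C, hC, hC'⟩ := IsCompactOperator.image_closedBall_subset_compact (f := K.toLinearMap) hK 2
  obtain ⟨y, -, ψ, hψ, hy⟩ := hC.tendsto_subseq (x := fun n => K (v n))
    (fun n => hC' ⟨v n, by simpa using hv2 n, rfl⟩)
  have hM' := hMlim.comp hψ.tendsto_atTop
  have hLlim : Tendsto (fun n => L (v (ψ n))) atTop (𝓝 (0 - y)) := by
    refine (hM'.sub hy).congr fun n => ?_
    simp [hM]
  obtain ⟨u, hu⟩ := hLe.isClosed_range.mem_of_tendsto hLlim
    (Eventually.of_forall fun n => ⟨_, rfl⟩)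
  rw [← hu] at hLlim
  have hvu : Tendsto (fun n => v (ψ n)) atTop (𝓝 u) := hLe.isInducing.tendsto_nhds_iff.2 hLlim
  have hMu : M u = 0 := tendsto_nhds_unique ((M.continuous.tendsto u).comp hvu) hM'
  have h0 : Tendsto (fun n => ‖v (ψ n) - u‖) atTop (𝓝 0) := by
    simpa using (hvu.sub_const u).norm
  have h1 : ∀ n, 1 ≤ ‖v (ψ n) - u‖ := fun n => by
    have e : (Submodule.Quotient.mk (v (ψ n)) : X ⧸ N) = Submodule.Quotient.mk (v (ψ n) - u) := by
      rw [Submodule.Quotient.eq]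
      simpa [N] using hMu
    rw [← hv1 (ψ n), e]
    exact Submodule.Quotient.norm_mk_le N _
  linarith [ge_of_tendsto' h0 h1]

/-- With `L` coercive, `K` compact, `M = L + K` and `Mᵗ` the transpose
`(Mᵗ u)(v) = (M v)(u)`, the range of `M` equals the annihilator of `ker Mᵗ`:
`Ran M = {ω ∈ X* : ω(u) = 0 for all u ∈ ker Mᵗ}`. -/
theorem stmt2 {X : Type*} [NormedAddCommGroup X] [NormedSpace ℝ X] [CompleteSpace X]
    (hrefl : Function.Bijective (NormedSpace.inclusionInDoubleDual ℝ X))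
    (L K : X →L[ℝ] (X →L[ℝ] ℝ)) (δ : ℝ) (hδ : 0 < δ)
    (hcoer : ∀ u : X, δ * ‖u‖ ^ 2 ≤ L u u)
    (hK : IsCompactOperator (⇑K))
    (M Mt : X →L[ℝ] (X →L[ℝ] ℝ))
    (hM : M = L + K)
    (hMt : ∀ u v : X, Mt u v = M v u) :
    Set.range (⇑M) = {ω : X →L[ℝ] ℝ | ∀ u : X, Mt u = 0 → ω u = 0} := by
  have hL : ∀ u, δ * ‖u‖ ≤ ‖L u‖ := by
    intro u
    rcases eq_or_ne u 0 with rfl | hu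
    · simp
    have hu' : 0 < ‖u‖ := norm_pos_iff.2 hu
    have h1 := hcoer u
    have h2 : L u u ≤ ‖L u‖ * ‖u‖ := (le_abs_self _).trans ((L u).le_opNorm u)
    refine le_of_mul_le_mul_right ?_ hu'
    nlinarith
  have hcl := closed_range_aux L K M δ hδ hL hK hM
  ext ω
  constructor
  · rintro ⟨v, rfl⟩ u hu
    rw [← hMt, hu]
    rfl
  · intro hω
    by_contra hn
    have hconv : Convex ℝ (Set.range (⇑M)) := by
      have := (LinearMap.range M.toLinearMap).convex
      rwa [LinearMap.coe_range] at this
    obtain ⟨F, s, hs, hsω⟩ := geometric_hahn_banach_closed_point hconv hcl hn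
    have hF : ∀ v, F (M v) = 0 := by
      intro v
      by_contra hne
      have := hs (M (((s + 1) / F (M v)) • v)) ⟨_, rfl⟩
      rw [map_smul, map_smul, smul_eq_mul, div_mul_cancel₀ _ hne] at this
      linarith
    have hs0 : 0 < s := by simpa using hs 0 ⟨0, by simp⟩
    obtain ⟨u, hu⟩ := hrefl.2 F
    have hFu : ∀ φ : X →L[ℝ] ℝ, F φ = φ u := fun φ => by rw [← hu]; rfl
    have hMu : Mt u = 0 := by
      ext v
      rw [hMt, ← hFu, hF]
      rfl
    have := hω u hMu
    rw [hFu, this] at hsω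
    linarith
end

section
/- Let H : ℝ³ → ℝ and M : ℝ³ → ℝ³ be C^∞ and 1-periodic in the second and third variables, and suppose that ∂₁H(x,y,z) = 0 and M₁(x,y,z) = 0 whenever x ∈ {0,1}. Then ∫_Σ [ H (∂_i M_i) + (∂_j H)(∂_j ∂_i M_i) + M_i (∂_i H) + (∂_j M_i)(∂_j ∂_i H) ] dx dy dz ≤ 0. (In fact this integral equals zero.) -/
open MeasureTheory

/-- Partial derivative in the `i`-th coordinate direction (coordinates `x,y,z ↔ 0,1,2`). -/
noncomputable def pd (i : Fin 3) (f : (Fin 3 → ℝ) → ℝ) : (Fin 3 → ℝ) → ℝ :=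
  fun p => fderiv ℝ f p (Pi.single i 1)

/-- 1-periodicity in the second and third variables. -/
def PerYZ (f : (Fin 3 → ℝ) → ℝ) : Prop :=
  ∀ p : Fin 3 → ℝ, f (p + Pi.single 1 1) = f p ∧ f (p + Pi.single 2 1) = f p

/-- The unit cube in `ℝ³`, the fundamental domain of `Σ = (0,1) × T²`. -/
def Cube : Set (Fin 3 → ℝ) := Set.Icc 0 1

theorem pd_contDiff (i : Fin 3) {f : (Fin 3 → ℝ) → ℝ} (hf : ContDiff ℝ (⊤ : ℕ∞) f) :
    ContDiff ℝ (⊤ : ℕ∞) (pd i f) := by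
  unfold pd
  exact (hf.fderiv_right (m := ((⊤ : ℕ∞) : WithTop ℕ∞)) (by simp)).clm_apply contDiff_const

theorem pd_per (i : Fin 3) {f : (Fin 3 → ℝ) → ℝ} (hf : PerYZ f) : PerYZ (pd i f) := by
  intro p
  have key : ∀ a : Fin 3 → ℝ, (∀ q, f (q + a) = f q) → pd i f (p + a) = pd i f p := by
    intro a ha
    unfold pd
    rw [← fderiv_comp_add_right a]
    simp only [ha]
  exact ⟨key _ fun q => (hf q).1, key _ fun q => (hf q).2⟩

theorem pd_comm (i j : Fin 3) {f : (Fin 3 → ℝ) → ℝ} (hf : ContDiff ℝ (⊤ : ℕ∞) f)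
    (p : Fin 3 → ℝ) : pd i (pd j f) p = pd j (pd i f) p := by
  have hd : DifferentiableAt ℝ (fderiv ℝ f) p :=
    ((hf.fderiv_right (m := ((⊤ : ℕ∞) : WithTop ℕ∞)) (by simp)).differentiable (by simp)) p
  have h : ∀ a b : Fin 3, pd a (pd b f) p
      = fderiv ℝ (fderiv ℝ f) p (Pi.single a 1) (Pi.single b 1) := by
    intro a b
    unfold pd
    rw [fderiv_clm_apply hd (differentiableAt_const _)]
    simp
  rw [h, h]
  exact (hf.contDiffAt.isSymmSndFDerivAt
    (by simp only [minSmoothness_of_isRCLikeNormedField]; exact WithTop.coe_le_coe.2 (le_top : (2 : ℕ∞) ≤ ⊤))) _ _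

theorem pd_mul (i : Fin 3) {f g : (Fin 3 → ℝ) → ℝ} (hf : ContDiff ℝ (⊤ : ℕ∞) f)
    (hg : ContDiff ℝ (⊤ : ℕ∞) g) (p : Fin 3 → ℝ) :
    pd i (fun q => f q * g q) p = f p * pd i g p + g p * pd i f p := by
  unfold pd
  rw [fderiv_fun_mul (hf.differentiable (by simp) p) (hg.differentiable (by simp) p)]
  simp

theorem pd_add (i : Fin 3) {f g : (Fin 3 → ℝ) → ℝ} (hf : ContDiff ℝ (⊤ : ℕ∞) f)
    (hg : ContDiff ℝ (⊤ : ℕ∞) g) (p : Fin 3 → ℝ) :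
    pd i (fun q => f q + g q) p = pd i f p + pd i g p := by
  unfold pd
  rw [fderiv_fun_add (hf.differentiable (by simp) p) (hg.differentiable (by simp) p)]
  simp

theorem pd_sum (i : Fin 3) {f : Fin 3 → (Fin 3 → ℝ) → ℝ} (hf : ∀ k, ContDiff ℝ (⊤ : ℕ∞) (f k))
    (p : Fin 3 → ℝ) :
    pd i (fun q => ∑ k, f k q) p = ∑ k, pd i (f k) p := by
  unfold pd
  rw [fderiv_fun_sum (fun k _ => (hf k).differentiable (by simp) p)]
  simp

theorem pd_tangential (j : Fin 3) (hj : j ≠ 0) {f : (Fin 3 → ℝ) → ℝ}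
    (hf : ContDiff ℝ (⊤ : ℕ∞) f) (p : Fin 3 → ℝ) (h : ∀ q : Fin 3 → ℝ, q 0 = p 0 → f q = 0) :
    pd j f p = 0 := by
  unfold pd
  rw [← (hf.differentiable (by simp) p).lineDeriv_eq_fderiv]
  unfold lineDeriv
  have : (fun t : ℝ => f (p + t • (Pi.single j 1 : Fin 3 → ℝ))) = fun _ => 0 := by
    funext t
    apply h
    simp [hj.symm]
  rw [this]
  simp

theorem div_zero_int (F : Fin 3 → (Fin 3 → ℝ) → ℝ) (hF : ∀ i, ContDiff ℝ (⊤ : ℕ∞) (F i))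
    (hp : ∀ i, PerYZ (F i)) (h0 : ∀ p : Fin 3 → ℝ, p 0 = 0 ∨ p 0 = 1 → F 0 p = 0) :
    ∫ p in Cube, ∑ i, pd i (F i) p = 0 := by
  unfold Cube
  have := integral_divergence_of_hasFDerivAt_off_countable' (n := 2) (E := ℝ)
    (0 : Fin 3 → ℝ) 1 (by intro i; simp) F (fun i p => fderiv ℝ (F i) p) ∅ (by simp)
    (fun i => (hF i).continuous.continuousOn)
    (fun x _ i => ((hF i).differentiable (by simp) x).hasFDerivAt)
    (by
      apply Continuous.integrableOn_Icc
      exact continuous_finsetSum _ fun i _ => (pd_contDiff i (hF i)).continuous)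
  refine this.trans ?_
  apply Finset.sum_eq_zero
  intro i _
  rw [sub_eq_zero]
  congr 1
  funext x
  simp only [Pi.one_apply, Pi.zero_apply]
  have shift : i.insertNth (1 : ℝ) x = (i.insertNth (0 : ℝ) x + Pi.single i 1 : Fin 3 → ℝ) := by
    funext k
    refine Fin.succAboveCases i ?_ (fun k => ?_) k <;> simp
  fin_cases i
  · exact (h0 _ (Or.inr (Fin.insertNth_apply_same (α := fun _ => ℝ) 0 _ _))).trans
      (h0 _ (Or.inl (Fin.insertNth_apply_same (α := fun _ => ℝ) 0 _ _))).symm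
  · exact (congrArg (F 1) shift).trans (hp 1 _).1
  · exact (congrArg (F 2) shift).trans (hp 2 _).2

theorem stmt8
    (H : (Fin 3 → ℝ) → ℝ) (M : Fin 3 → (Fin 3 → ℝ) → ℝ)
    (hHs : ContDiff ℝ (⊤ : ℕ∞) H) (hMs : ∀ i, ContDiff ℝ (⊤ : ℕ∞) (M i))
    (hHp : PerYZ H) (hMp : ∀ i, PerYZ (M i))
    (hbc : ∀ p : Fin 3 → ℝ, p 0 = 0 ∨ p 0 = 1 → pd 0 H p = 0 ∧ M 0 p = 0) :
    (∫ p in Cube,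
      (H p * (∑ i, pd i (M i) p)
        + ∑ j, pd j H p * pd j (fun q => ∑ i, pd i (M i) q) p
        + ∑ i, M i p * pd i H p
        + ∑ i, ∑ j, pd j (M i) p * pd j (pd i H) p)) ≤ 0 := by
  have hG : ∀ i j, ContDiff ℝ (⊤ : ℕ∞) (fun q => pd j H q * pd j (M i) q) := fun i j =>
    (pd_contDiff j hHs).mul (pd_contDiff j (hMs i))
  have hS : ∀ i, ContDiff ℝ (⊤ : ℕ∞) (fun q => ∑ j, pd j H q * pd j (M i) q) := fun i =>
    ContDiff.sum fun j _ => hG i j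
  have hHM : ∀ i, ContDiff ℝ (⊤ : ℕ∞) (fun q => H q * M i q) := fun i => hHs.mul (hMs i)
  have key := div_zero_int (fun i q => H q * M i q + ∑ j, pd j H q * pd j (M i) q)
    (fun i => (hHM i).add (hS i))
    (fun i p => by
      constructor
      · simp only [(hHp p).1, (hMp i p).1, fun j => (pd_per j hHp p).1,
          fun j => (pd_per j (hMp i) p).1]
      · simp only [(hHp p).2, (hMp i p).2, fun j => (pd_per j hHp p).2,
          fun j => (pd_per j (hMp i) p).2])
    (fun p hp => by
      have ht : ∀ j : Fin 3, j ≠ 0 → pd j (M 0) p = 0 := fun j hj =>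
        pd_tangential j hj (hMs 0) p fun q hq => (hbc q (by rw [hq]; exact hp)).2
      simp [Fin.sum_univ_three, hbc p hp, ht 1 (by decide), ht 2 (by decide)])
  refine le_of_eq (Eq.trans ?_ key)
  congr 1
  funext p
  have e1 : ∀ i, pd i (fun q => H q * M i q + ∑ j, pd j H q * pd j (M i) q) p
      = (H p * pd i (M i) p + M i p * pd i H p)
        + ∑ j, (pd j H p * pd j (pd i (M i)) p + pd j (M i) p * pd j (pd i H) p) := by
    intro i
    rw [pd_add i (hHM i) (hS i), pd_mul i hHs (hMs i), pd_sum i (hG i)]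
    congr 1
    apply Finset.sum_congr rfl
    intro j _
    rw [pd_mul i (pd_contDiff j hHs) (pd_contDiff j (hMs i)), pd_comm i j hHs,
      pd_comm i j (hMs i)]
  simp only [e1]
  have e2 : ∀ j, pd j (fun q => ∑ i, pd i (M i) q) p = ∑ i, pd j (pd i (M i)) p := fun j =>
    pd_sum j (fun i => pd_contDiff i (hMs i)) p
  simp only [e2]
  simp only [Fin.sum_univ_three]
  ring
end

section
/- For every ε > 0 and every pair q₀, q₁ : ℝ² → ℂ of C^∞ functions which are 1-periodic in both variables, there exists a symmetric tensor field k (a C^∞ map from ℝ³ to symmetric real 3×3 matrices, 1-periodic in the second and third variables) such that (M k)₁(x,y,z) = 0 whenever x ∈ {0,1}, (curl k)_{ij}(0,y,z) m_i m_j = q₀(y,z) and (curl k)_{ij}(1,y,z) m_i m_j = q₁(y,z) for all (y,z) ∈ ℝ², and such that ∫_Σ Σ_{i,j} k_{ij}² < ε², ∫_Σ Σ_{i,j} (curl k)_{ij}² < ε², and ∫_Σ Σ_i ( (M k)_i² + Σ_j (∂_j (M k)_i)² ) < ε². -/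
open MeasureTheory

/-- 1-periodicity in both variables, for functions on `ℝ²`. -/
def PerBoth {α : Type*} (G : (Fin 2 → ℝ) → α) : Prop :=
  ∀ q : Fin 2 → ℝ, G (q + Pi.single 0 1) = G q ∧ G (q + Pi.single 1 1) = G q

/-- The alternating symbol `ε_{ijk}` with `ε₀₁₂ = 1`. -/
noncomputable def epsR (i j k : Fin 3) : ℝ :=
  (((i : ℕ) : ℝ) - ((j : ℕ) : ℝ)) * (((j : ℕ) : ℝ) - ((k : ℕ) : ℝ))
    * (((k : ℕ) : ℝ) - ((i : ℕ) : ℝ)) / 2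

/-- The complex null vector `m = (0, 1, i)/√2`. -/
noncomputable def mC : Fin 3 → ℂ := ![0, 1 / (Real.sqrt 2 : ℂ), Complex.I / (Real.sqrt 2 : ℂ)]

/-- The curl of a symmetric tensor field: `(curl k)_{ij} = ½(ε_{abi}∂ₐk_{bj} + ε_{abj}∂ₐk_{bi})`. -/
noncomputable def curlT (k : Fin 3 → Fin 3 → (Fin 3 → ℝ) → ℝ) (i j : Fin 3) :
    (Fin 3 → ℝ) → ℝ :=
  fun p => (∑ a, ∑ b, (epsR a b i * pd a (k b j) p + epsR a b j * pd a (k b i) p)) / 2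

/-- The momentum operator `(M k)_i = ∂ᵢ(k_{jj}) - ∂ⱼ k_{ij}`. -/
noncomputable def momT (k : Fin 3 → Fin 3 → (Fin 3 → ℝ) → ℝ) (i : Fin 3) :
    (Fin 3 → ℝ) → ℝ :=
  fun p => ∑ j, (pd i (k j j) p - pd j (k i j) p)

open Filter Topology

/-- Smooth and independent of the first coordinate. -/
def InvX (G : (Fin 3 → ℝ) → ℝ) : Prop :=
  ContDiff ℝ (⊤ : ℕ∞) G ∧ ∀ (p : Fin 3 → ℝ) (t : ℝ), G (p + t • Pi.single 0 1) = G p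

lemma InvX.add {G H : (Fin 3 → ℝ) → ℝ} (hG : InvX G) (hH : InvX H) :
    InvX (fun p => G p + H p) :=
  ⟨hG.1.add hH.1, fun p t => by simp only [hG.2, hH.2]⟩

lemma InvX.neg {G : (Fin 3 → ℝ) → ℝ} (hG : InvX G) : InvX (fun p => - G p) :=
  ⟨hG.1.neg, fun p t => by simp only [hG.2]⟩

lemma InvX.pd {G : (Fin 3 → ℝ) → ℝ} (hG : InvX G) (i : Fin 3) : InvX (pd i G) := by
  refine ⟨?_, fun p t => ?_⟩
  · have h1 : ContDiff ℝ (⊤ : ℕ∞) (fderiv ℝ G) :=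
      hG.1.fderiv_right (m := (⊤ : ℕ∞)) (by norm_cast)
    exact h1.clm_apply contDiff_const
  · unfold _root_.pd
    have : (fun p => G (p + t • Pi.single 0 1)) = G := funext fun p => hG.2 p t
    rw [← fderiv_comp_add_right, this]

lemma InvX.pd_zero {G : (Fin 3 → ℝ) → ℝ} (hG : InvX G) (p : Fin 3 → ℝ) :
    _root_.pd 0 G p = 0 := by
  unfold _root_.pd
  have hd : DifferentiableAt ℝ G p := hG.1.contDiffAt.differentiableAt (by simp)
  rw [← hd.lineDeriv_eq_fderiv]
  unfold lineDeriv
  simp only [hG.2]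
  simp

/-- The building block `u(x) G + v(x) H`. -/
noncomputable def TT (u v : ℝ → ℝ) (G H : (Fin 3 → ℝ) → ℝ) : (Fin 3 → ℝ) → ℝ :=
  fun p => u (p 0) * G p + v (p 0) * H p

lemma TT_hasFDerivAt {u v : ℝ → ℝ} {u' v' : ℝ} {G H : (Fin 3 → ℝ) → ℝ}
    (hG : InvX G) (hH : InvX H) (p : Fin 3 → ℝ)
    (hu : HasDerivAt u u' (p 0)) (hv : HasDerivAt v v' (p 0)) (i : Fin 3) :
    pd i (TT u v G H) p = (Pi.single i (1:ℝ) : Fin 3 → ℝ) 0 * (u' * G p + v' * H p)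
      + (u (p 0) * pd i G p + v (p 0) * pd i H p) := by
  have hdG : HasFDerivAt G _ p :=
    (hG.1.contDiffAt.differentiableAt (by simp)).hasFDerivAt
  have hdH : HasFDerivAt H _ p :=
    (hH.1.contDiffAt.differentiableAt (by simp)).hasFDerivAt
  have h0 : HasFDerivAt (fun p : Fin 3 → ℝ => p 0)
      (ContinuousLinearMap.proj (R := ℝ) (φ := fun _ : Fin 3 => ℝ) 0) p :=
    hasFDerivAt_apply 0 p
  have h1 := hu.comp_hasFDerivAt p h0
  have h2 := hv.comp_hasFDerivAt p h0
  have h := (h1.mul hdG).add (h2.mul hdH)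
  have h3 : HasFDerivAt (TT u v G H) _ p := h
  unfold pd
  rw [h3.fderiv]
  simp
  ring

lemma pd_neg' (i : Fin 3) (f : (Fin 3 → ℝ) → ℝ) (p) : pd i (fun p => - f p) p = - pd i f p := by
  unfold pd
  rw [fderiv_fun_neg]; rfl

lemma pd_zero' (i : Fin 3) (p) : pd i (fun _ => (0:ℝ)) p = 0 := by
  unfold pd
  simp

/-- Bounded on the cube, tending to zero inside. -/
def SmallF (F : ℕ → (Fin 3 → ℝ) → ℝ) : Prop :=
  (∀ n, Continuous (F n)) ∧ (∃ C, ∀ n, ∀ p ∈ Cube, |F n p| ≤ C) ∧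
    ∀ p ∈ Cube, p 0 ≠ 0 → p 0 ≠ 1 → Tendsto (fun n => F n p) atTop (𝓝 0)

lemma SmallF.add {F G} (hF : SmallF F) (hG : SmallF G) : SmallF (fun n p => F n p + G n p) := by
  obtain ⟨C, hC⟩ := hF.2.1
  obtain ⟨D, hD⟩ := hG.2.1
  refine ⟨fun n => (hF.1 n).add (hG.1 n), ⟨C + D, fun n p hp => ?_⟩, fun p hp h0 h1 => ?_⟩
  · exact (abs_add_le _ _).trans (add_le_add (hC n p hp) (hD n p hp))
  · simpa using (hF.2.2 p hp h0 h1).add (hG.2.2 p hp h0 h1)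

lemma SmallF.mul {F G} (hF : SmallF F) (hG : SmallF G) : SmallF (fun n p => F n p * G n p) := by
  obtain ⟨C, hC⟩ := hF.2.1
  obtain ⟨D, hD⟩ := hG.2.1
  refine ⟨fun n => (hF.1 n).mul (hG.1 n), ⟨C * D, fun n p hp => ?_⟩, fun p hp h0 h1 => ?_⟩
  · rw [abs_mul]
    exact mul_le_mul (hC n p hp) (hD n p hp) (abs_nonneg _) ((abs_nonneg _).trans (hC n p hp))
  · simpa using (hF.2.2 p hp h0 h1).mul (hG.2.2 p hp h0 h1)

lemma SmallF.sq {F} (hF : SmallF F) : SmallF (fun n p => F n p ^ 2) := by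
  simpa only [pow_two] using hF.mul hF

lemma SmallF.zero : SmallF (fun _ _ => 0) :=
  ⟨fun _ => continuous_const, ⟨0, by simp⟩, fun _ _ _ _ => tendsto_const_nhds⟩

lemma SmallF.neg {F} (hF : SmallF F) : SmallF (fun n p => - F n p) := by
  obtain ⟨C, hC⟩ := hF.2.1
  refine ⟨fun n => (hF.1 n).neg, ⟨C, fun n p hp => ?_⟩, fun p hp h0 h1 => ?_⟩
  · rw [abs_neg]; exact hC n p hp
  · simpa using (hF.2.2 p hp h0 h1).neg

lemma SmallF.sum {ι : Type*} (s : Finset ι) {F : ι → ℕ → (Fin 3 → ℝ) → ℝ}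
    (hF : ∀ i, SmallF (F i)) : SmallF (fun n p => ∑ i ∈ s, F i n p) := by
  classical
  induction s using Finset.induction_on with
  | empty => simpa using SmallF.zero
  | insert a s ha ih => simpa only [Finset.sum_insert ha] using (hF a).add ih

lemma isCompact_Cube : IsCompact Cube := isCompact_Icc

lemma SmallF.mul_cont {F} (hF : SmallF F) {g : (Fin 3 → ℝ) → ℝ} (hg : Continuous g) :
    SmallF (fun n p => F n p * g p) := by
  obtain ⟨C, hC⟩ := hF.2.1
  obtain ⟨D, hD⟩ := isCompact_Cube.exists_bound_of_continuousOn hg.continuousOn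
  refine ⟨fun n => (hF.1 n).mul hg, ⟨C * D, fun n p hp => ?_⟩, fun p hp h0 h1 => ?_⟩
  · rw [abs_mul]
    exact mul_le_mul (hC n p hp) (hD p hp) (abs_nonneg _) ((abs_nonneg _).trans (hC n p hp))
  · simpa using (hF.2.2 p hp h0 h1).mul_const (g p)

lemma ae_ne (c : ℝ) : ∀ᵐ p : Fin 3 → ℝ, p 0 ≠ c := by
  rw [ae_iff]
  simp only [not_not]
  rw [volume_pi]
  exact Measure.pi_hyperplane (fun _ : Fin 3 => (volume : Measure ℝ)) 0 c

lemma SmallF.integral {F} (hF : SmallF F) :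
    Tendsto (fun n => ∫ p in Cube, F n p) atTop (𝓝 0) := by
  obtain ⟨C, hC⟩ := hF.2.1
  have hm : MeasurableSet Cube := isCompact_Cube.measurableSet
  have h := tendsto_integral_of_dominated_convergence (μ := volume.restrict Cube)
    (F := F) (f := fun _ => 0) (fun _ => C) (fun n => (hF.1 n).aestronglyMeasurable)
    (by
      have : volume Cube < ⊤ := isCompact_Cube.measure_lt_top
      exact integrableOn_const this.ne)
    (fun n => by
      filter_upwards [ae_restrict_mem hm] with p hp
      exact hC n p hp)
    (by
      filter_upwards [ae_restrict_mem hm, ae_restrict_of_ae (ae_ne 0),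
        ae_restrict_of_ae (ae_ne 1)] with p hp h0 h1
      exact hF.2.2 p hp h0 h1)
  simpa using h

/-- The profile concentrating at `x = 0`. -/
noncomputable def uu (n : ℕ) (x : ℝ) : ℝ := - (1 - x) ^ (n + 1) / (n + 1)

/-- The profile concentrating at `x = 1`. -/
noncomputable def vv (n : ℕ) (x : ℝ) : ℝ := x ^ (n + 1) / (n + 1)

lemma vv_deriv (n : ℕ) (x : ℝ) : HasDerivAt (vv n) (x ^ n) x := by
  have h := (hasDerivAt_pow (n + 1) x).div_const ((n : ℝ) + 1)
  have hn : (n : ℝ) + 1 ≠ 0 := by positivity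
  have h2 : (((n + 1 : ℕ) : ℝ) * x ^ (n + 1 - 1) / ((n : ℝ) + 1)) = x ^ n := by
    rw [div_eq_iff hn]
    push_cast
    ring
  rw [h2] at h
  exact h

lemma uu_deriv (n : ℕ) (x : ℝ) : HasDerivAt (uu n) ((1 - x) ^ n) x := by
  have h := ((vv_deriv n (1 - x)).comp x ((hasDerivAt_id x).const_sub 1)).neg
  have h2 : uu n = -(vv n ∘ fun x => 1 - id x) := by
    funext y; simp [uu, vv, neg_div]
  rw [h2]
  simpa using h

lemma contDiff_uu (n : ℕ) : ContDiff ℝ (⊤ : ℕ∞) (uu n) := by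
  unfold uu; fun_prop

lemma contDiff_vv (n : ℕ) : ContDiff ℝ (⊤ : ℕ∞) (vv n) := by
  unfold vv; fun_prop

lemma cube_zero {p : Fin 3 → ℝ} (hp : p ∈ Cube) : 0 ≤ p 0 ∧ p 0 ≤ 1 := ⟨hp.1 0, hp.2 0⟩

lemma small_pow {w : ℝ → ℝ} (hw : Continuous w) (h1 : ∀ x, 0 ≤ x → x ≤ 1 → 0 ≤ w x ∧ w x ≤ 1)
    (h2 : ∀ x, 0 < x → x < 1 → w x < 1) : SmallF (fun n p => w (p 0) ^ n) := by
  refine ⟨fun n => by fun_prop, ⟨1, fun n p hp => ?_⟩, fun p hp h0 h1' => ?_⟩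
  · obtain ⟨a, b⟩ := cube_zero hp
    obtain ⟨c, d⟩ := h1 _ a b
    rw [abs_of_nonneg (by positivity)]
    exact pow_le_one₀ c d
  · obtain ⟨a, b⟩ := cube_zero hp
    obtain ⟨c, d⟩ := h1 _ a b
    exact tendsto_pow_atTop_nhds_zero_of_lt_one c
      (h2 _ (lt_of_le_of_ne a (Ne.symm h0)) (lt_of_le_of_ne b h1'))

lemma small_inv : SmallF (fun n _ => 1 / ((n : ℝ) + 1)) := by
  refine ⟨fun n => continuous_const, ⟨1, fun n p hp => ?_⟩, fun p hp h0 h1' =>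
    tendsto_one_div_add_atTop_nhds_zero_nat⟩
  rw [abs_of_nonneg (by positivity), div_le_one (by positivity)]
  linarith [(Nat.cast_nonneg n : (0:ℝ) ≤ n)]

lemma small_du : SmallF (fun n p => (1 - p 0) ^ n) :=
  small_pow (w := fun x => 1 - x) (by fun_prop) (fun x _ _ => ⟨by linarith, by linarith⟩)
    (fun x _ _ => by linarith)

lemma small_dv : SmallF (fun n p => (p 0) ^ n) :=
  small_pow (w := fun x => x) (by fun_prop) (fun x _ _ => ⟨by linarith, by linarith⟩)
    (fun x _ _ => by linarith)

lemma small_v : SmallF (fun n p => vv n (p 0)) := by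
  have h := (small_inv.mul small_dv).mul_cont (g := fun p => p 0) (by fun_prop)
  convert h using 3 with n p
  simp only [vv]; ring

lemma small_u : SmallF (fun n p => uu n (p 0)) := by
  have h := (small_inv.mul small_du).mul_cont (g := fun p => -(1 - p 0)) (by fun_prop)
  convert h using 3 with n p
  simp only [uu]; ring

lemma small_T {G H} (hG : InvX G) (hH : InvX H) : SmallF (fun n => TT (uu n) (vv n) G H) :=
  (small_u.mul_cont hG.1.continuous).add (small_v.mul_cont hH.1.continuous)

lemma pd_T {G H} (hG : InvX G) (hH : InvX H) (n : ℕ) (i : Fin 3) (p) :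
    pd i (TT (uu n) (vv n) G H) p
      = (Pi.single i (1:ℝ) : Fin 3 → ℝ) 0 * ((1 - p 0) ^ n * G p + (p 0) ^ n * H p)
      + TT (uu n) (vv n) (pd i G) (pd i H) p :=
  TT_hasFDerivAt hG hH p (uu_deriv n _) (vv_deriv n _) i

lemma small_pd_T {G H} (hG : InvX G) (hH : InvX H) (i : Fin 3) :
    SmallF (fun n => pd i (TT (uu n) (vv n) G H)) := by
  have h := (((small_du.mul_cont hG.1.continuous).add
    (small_dv.mul_cont hH.1.continuous)).mul_cont
      (g := fun _ => (Pi.single i (1:ℝ) : Fin 3 → ℝ) 0) continuous_const).add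
      (small_T (hG.pd i) (hH.pd i))
  convert h using 3 with n p
  rw [pd_T hG hH]; ring

lemma contDiff_T {G H} (hG : InvX G) (hH : InvX H) (n : ℕ) :
    ContDiff ℝ (⊤ : ℕ∞) (TT (uu n) (vv n) G H) := by
  have h0 : ContDiff ℝ (⊤ : ℕ∞) (fun p : Fin 3 → ℝ => p 0) := contDiff_apply ℝ ℝ 0
  exact (((contDiff_uu n).comp h0).mul hG.1).add (((contDiff_vv n).comp h0).mul hH.1)

lemma per_T {G H} (hG : PerYZ G) (hH : PerYZ H) (n : ℕ) : PerYZ (TT (uu n) (vv n) G H) := by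
  intro p
  simp [TT, (hG p).1, (hG p).2, (hH p).1, (hH p).2]

/-- The tensor with `k_yy = a`, `k_zz = -a`, `k_yz = b`. -/
noncomputable def KK (a b : (Fin 3 → ℝ) → ℝ) : Fin 3 → Fin 3 → (Fin 3 → ℝ) → ℝ :=
  ![![fun _ => 0, fun _ => 0, fun _ => 0], ![fun _ => 0, a, b],
    ![fun _ => 0, b, fun p => - a p]]

lemma curl_KK (a b) (p) : (fun i j => curlT (KK a b) i j p) =
    ![![0, -(pd 1 b p) / 2 * 0 + (pd 1 (b) p - pd 2 a p) / 2, (-(pd 1 a p) - pd 2 b p) / 2],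
      ![(pd 1 (b) p - pd 2 a p) / 2, - pd 0 b p, pd 0 a p],
      ![(-(pd 1 a p) - pd 2 b p) / 2, pd 0 a p, pd 0 b p]] := by
  funext i j
  fin_cases i <;> fin_cases j <;>
  simp [curlT, KK, Fin.sum_univ_three, epsR, pd_neg', pd_zero'] <;> ring

lemma mom_KK (a b) (i) (p) : momT (KK a b) i p =
    ![0, - pd 1 a p - pd 2 b p, pd 2 a p - pd 1 b p] i := by
  fin_cases i <;>
  simp [momT, KK, Fin.sum_univ_three, pd_neg', pd_zero'] <;> ring

lemma curl_mm (a b) (p) :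
    (∑ i, ∑ j, (curlT (KK a b) i j p : ℂ) * mC i * mC j)
      = -(pd 0 b p : ℂ) + Complex.I * (pd 0 a p : ℂ) := by
  have h := curl_KK a b p
  have h' : ∀ i j, curlT (KK a b) i j p = _ := fun i j => congrFun (congrFun h i) j
  have hs : ((Real.sqrt 2 : ℝ) : ℂ) * (Real.sqrt 2 : ℝ) = 2 := by
    rw [← Complex.ofReal_mul, Real.mul_self_sqrt (by norm_num)]; norm_num
  have hs0 : ((Real.sqrt 2 : ℝ) : ℂ) ≠ 0 := by
    intro h0; rw [h0] at hs; norm_num at hs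
  simp only [h', Fin.sum_univ_three, mC]
  simp
  field_simp
  rw [pow_two ((Real.sqrt 2 : ℝ) : ℂ), hs]
  linear_combination (pd 0 b p : ℂ) * Complex.I_sq

/-- Lift of a function of `(y,z)`. -/
def lift3 (g : (Fin 2 → ℝ) → ℝ) : (Fin 3 → ℝ) → ℝ := fun p => g ![p 1, p 2]

lemma inv_lift3 {g} (hg : ContDiff ℝ (⊤ : ℕ∞) g) : InvX (lift3 g) := by
  refine ⟨?_, fun p t => ?_⟩
  · unfold lift3
    apply hg.comp
    rw [contDiff_pi]
    intro i
    fin_cases i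
    · exact contDiff_apply ℝ ℝ (1 : Fin 3)
    · exact contDiff_apply ℝ ℝ (2 : Fin 3)
  · simp [lift3]

lemma per_lift3 {g : (Fin 2 → ℝ) → ℝ} (hg : PerBoth g) : PerYZ (lift3 g) := by
  intro p
  constructor
  · rw [lift3, lift3, ← (hg ![p 1, p 2]).1]
    congr 1
    funext i; fin_cases i <;> simp
  · rw [lift3, lift3, ← (hg ![p 1, p 2]).2]
    congr 1
    funext i; fin_cases i <;> simp

/-- For every `ε > 0` and smooth doubly periodic boundary data
`q₀, q₁ : ℝ² → ℂ` there is a symmetric smooth periodic tensor field `k` with vanishing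
normal momentum `(M k)₁ = 0` on the faces, `(curl k)_{ij} mᵢ mⱼ = q₀` on `x = 0` and
`= q₁` on `x = 1`, whose `L²` norm and the `L²` norm of `curl k` and the `H¹` norm of
`M k` are all smaller than `ε`. -/
theorem stmt15 (ε : ℝ) (hε : 0 < ε) (q₀ q₁ : (Fin 2 → ℝ) → ℂ)
    (hq₀s : ContDiff ℝ (⊤ : ℕ∞) q₀) (hq₁s : ContDiff ℝ (⊤ : ℕ∞) q₁)
    (hq₀p : PerBoth q₀) (hq₁p : PerBoth q₁) :
    ∃ k : Fin 3 → Fin 3 → (Fin 3 → ℝ) → ℝ,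
      (∀ i j, k i j = k j i) ∧
      (∀ i j, ContDiff ℝ (⊤ : ℕ∞) (k i j)) ∧
      (∀ i j, PerYZ (k i j)) ∧
      (∀ p : Fin 3 → ℝ, p 0 = 0 ∨ p 0 = 1 → momT k 0 p = 0) ∧
      (∀ p : Fin 3 → ℝ, p 0 = 0 →
        (∑ i, ∑ j, (curlT k i j p : ℂ) * mC i * mC j) = q₀ ![p 1, p 2]) ∧
      (∀ p : Fin 3 → ℝ, p 0 = 1 →
        (∑ i, ∑ j, (curlT k i j p : ℂ) * mC i * mC j) = q₁ ![p 1, p 2]) ∧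
      (∫ p in Cube, ∑ i, ∑ j, (k i j p) ^ 2) < ε ^ 2 ∧
      (∫ p in Cube, ∑ i, ∑ j, (curlT k i j p) ^ 2) < ε ^ 2 ∧
      (∫ p in Cube, ∑ i, ((momT k i p) ^ 2 + ∑ j, (pd j (momT k i) p) ^ 2)) < ε ^ 2 := by
  set A₀ := lift3 (fun q => (q₀ q).im) with hA₀
  set A₁ := lift3 (fun q => (q₁ q).im) with hA₁
  set B₀ := lift3 (fun q => - (q₀ q).re) with hB₀
  set B₁ := lift3 (fun q => - (q₁ q).re) with hB₁
  have iA₀ : InvX A₀ := inv_lift3 (Complex.imCLM.contDiff.comp hq₀s)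
  have iA₁ : InvX A₁ := inv_lift3 (Complex.imCLM.contDiff.comp hq₁s)
  have iB₀ : InvX B₀ := inv_lift3 (Complex.reCLM.contDiff.comp hq₀s).neg
  have iB₁ : InvX B₁ := inv_lift3 (Complex.reCLM.contDiff.comp hq₁s).neg
  have pA₀ : PerYZ A₀ := per_lift3 fun q => by simp [hq₀p q]
  have pA₁ : PerYZ A₁ := per_lift3 fun q => by simp [hq₁p q]
  have pB₀ : PerYZ B₀ := per_lift3 fun q => by simp [hq₀p q]
  have pB₁ : PerYZ B₁ := per_lift3 fun q => by simp [hq₁p q]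
  let a : ℕ → (Fin 3 → ℝ) → ℝ := fun n => TT (uu n) (vv n) A₀ A₁
  let b : ℕ → (Fin 3 → ℝ) → ℝ := fun n => TT (uu n) (vv n) B₀ B₁
  have sa : SmallF a := small_T iA₀ iA₁
  have sb : SmallF b := small_T iB₀ iB₁
  have sda : ∀ i, SmallF (fun n => pd i (a n)) := small_pd_T iA₀ iA₁
  have sdb : ∀ i, SmallF (fun n => pd i (b n)) := small_pd_T iB₀ iB₁
  have sk : ∀ i j, SmallF (fun n => KK (a n) (b n) i j) := by
    intro i j
    fin_cases i <;> fin_cases j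
    · exact SmallF.zero
    · exact SmallF.zero
    · exact SmallF.zero
    · exact SmallF.zero
    · exact sa
    · exact sb
    · exact SmallF.zero
    · exact sb
    · exact sa.neg
  have sdk : ∀ c i j, SmallF (fun n => pd c (KK (a n) (b n) i j)) := by
    intro c i j
    have hz : SmallF (fun _ => pd c (fun _ => (0:ℝ))) := by
      convert SmallF.zero using 3; exact pd_zero' _ _
    fin_cases i <;> fin_cases j
    · exact hz
    · exact hz
    · exact hz
    · exact hz
    · exact sda c
    · exact sdb c
    · exact hz
    · exact sdb c
    · have := (sda c).neg
      convert this using 3; exact pd_neg' _ _ _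
  have sc : ∀ i j, SmallF (fun n => curlT (KK (a n) (b n)) i j) := by
    intro i j
    have := (SmallF.sum Finset.univ (fun a' => SmallF.sum Finset.univ (fun b' =>
      ((sdk a' b' j).mul_cont (g := fun _ => epsR a' b' i) continuous_const).add
      ((sdk a' b' i).mul_cont (g := fun _ => epsR a' b' j) continuous_const)))).mul_cont
        (g := fun _ => (1/2 : ℝ)) continuous_const
    convert this using 3 with n p
    simp only [curlT, mul_comm, div_eq_mul_inv, one_mul]
  have hmom : ∀ i, ∃ G H, InvX G ∧ InvX H ∧
      ∀ n, momT (KK (a n) (b n)) i = TT (uu n) (vv n) G H := by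
    have hone : ∀ (i : Fin 3), i ≠ 0 → ∀ {G H} (_ : InvX G) (_ : InvX H) (n) (p),
        pd i (TT (uu n) (vv n) G H) p = TT (uu n) (vv n) (pd i G) (pd i H) p := by
      intro i hi G H hG hH n p
      rw [pd_T hG hH, Pi.single_eq_of_ne (Ne.symm hi)]; ring
    intro i
    fin_cases i
    · refine ⟨fun _ => 0, fun _ => 0, ⟨contDiff_const, by simp⟩, ⟨contDiff_const, by simp⟩,
        fun n => ?_⟩
      funext p
      simp [mom_KK, TT]
    · refine ⟨_, _, (iA₀.pd 1).neg.add (iB₀.pd 2).neg, (iA₁.pd 1).neg.add (iB₁.pd 2).neg,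
        fun n => ?_⟩
      funext p
      simp [mom_KK, a, b]
      rw [hone 1 (by decide) iA₀ iA₁, hone 2 (by decide) iB₀ iB₁]
      simp only [TT]; ring
    · refine ⟨_, _, (iA₀.pd 2).add (iB₀.pd 1).neg, (iA₁.pd 2).add (iB₁.pd 1).neg,
        fun n => ?_⟩
      funext p
      simp [mom_KK, a, b]
      rw [hone 2 (by decide) iA₀ iA₁, hone 1 (by decide) iB₀ iB₁]
      simp only [TT]; ring
  have sm : ∀ i, SmallF (fun n => momT (KK (a n) (b n)) i) := by
    intro i
    obtain ⟨G, H, hG, hH, h⟩ := hmom i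
    simp only [h]
    exact small_T hG hH
  have sdm : ∀ i j, SmallF (fun n => pd j (momT (KK (a n) (b n)) i)) := by
    intro i j
    obtain ⟨G, H, hG, hH, h⟩ := hmom i
    simp only [h]
    exact small_pd_T hG hH j
  have l1 := (SmallF.sum Finset.univ fun i => SmallF.sum Finset.univ fun j => (sk i j).sq).integral
  have l2 := (SmallF.sum Finset.univ fun i => SmallF.sum Finset.univ fun j => (sc i j).sq).integral
  have l3 := (SmallF.sum Finset.univ fun i => (sm i).sq.add
    (SmallF.sum Finset.univ fun j => (sdm i j).sq)).integral
  have he : (0:ℝ) < ε ^ 2 := by positivity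
  obtain ⟨n, h1, h2, h3, hn⟩ := ((l1.eventually_lt_const he).and
    ((l2.eventually_lt_const he).and ((l3.eventually_lt_const he).and
      (eventually_ge_atTop 1)))).exists
  have hn0 : n ≠ 0 := by omega
  have cdz : ContDiff ℝ (⊤ : ℕ∞) (fun _ : Fin 3 → ℝ => (0:ℝ)) := contDiff_const
  have pz : PerYZ (fun _ => 0) := fun p => ⟨rfl, rfl⟩
  have ca : ContDiff ℝ (⊤ : ℕ∞) (a n) := contDiff_T iA₀ iA₁ n
  have cb : ContDiff ℝ (⊤ : ℕ∞) (b n) := contDiff_T iB₀ iB₁ n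
  have pa : PerYZ (a n) := per_T pA₀ pA₁ n
  have pb : PerYZ (b n) := per_T pB₀ pB₁ n
  have pna : PerYZ (fun p => - a n p) := fun p => by simp [pa p]
  refine ⟨KK (a n) (b n), ?_, ?_, ?_, ?_, ?_, ?_, h1, h2, h3⟩
  · intro i j
    fin_cases i <;> fin_cases j <;> rfl
  · intro i j
    fin_cases i <;> fin_cases j
    exacts [cdz, cdz, cdz, cdz, ca, cb, cdz, cb, ca.neg]
  · intro i j
    fin_cases i <;> fin_cases j
    exacts [pz, pz, pz, pz, pa, pb, pz, pb, pna]
  · intro p _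
    simp [mom_KK]
  · intro p hp
    rw [curl_mm]
    simp only [a, b]
    rw [pd_T iA₀ iA₁, pd_T iB₀ iB₁]
    simp only [TT, iA₀.pd_zero, iA₁.pd_zero, iB₀.pd_zero, iB₁.pd_zero, hp]
    apply Complex.ext <;> simp [hA₀, hB₀, lift3, hn0]
  · intro p hp
    rw [curl_mm]
    simp only [a, b]
    rw [pd_T iA₀ iA₁, pd_T iB₀ iB₁]
    simp only [TT, iA₀.pd_zero, iA₁.pd_zero, iB₀.pd_zero, iB₁.pd_zero, hp]
    apply Complex.ext <;> simp [hA₁, hB₁, lift3, hn0]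
end

section
/- Let λ > 0 and let P, Q : ℝ³ → ℝ³ be C^∞ maps, 1-periodic in the second and third variables, satisfying at all points of [0,1]×ℝ² the system: λ Q₁ = −(∂₂P₃ − ∂₃P₂), λ Q₂ = −½ ∂₃P₁, λ Q₃ = ½ ∂₂P₁, λ P₁ = ∂₂Q₃ − ∂₃Q₂, λ P₂ = ½ ∂₃Q₁, λ P₃ = −½ ∂₂Q₁. Then P and Q vanish identically on [0,1]×ℝ². -/
lemma aux_second (g h : ℝ → ℝ) (c : ℝ) (hg : ∀ t, HasDerivAt g (h t) t) (hh : HasDerivAt h c 0)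
    (hmax : ∀ t, g t ≤ g 0) : c ≤ 0 := by
  by_contra hc
  push Not at hc
  have hd : deriv g = h := funext fun t => (hg t).deriv
  have h0 : h 0 = 0 := by
    have : IsLocalMax g 0 := Filter.Eventually.of_forall hmax
    exact this.hasDerivAt_eq_zero (hg 0)
  have hmin : IsLocalMin g 0 :=
    isLocalMin_of_deriv_deriv_pos (by rw [hd, hh.deriv]; exact hc) (by rw [hd, h0])
      (hg 0).continuousAt
  have hconst : g =ᶠ[nhds 0] fun _ => g 0 := by
    filter_upwards [hmin] with t ht using le_antisymm (hmax t) ht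
  have h1 : deriv g =ᶠ[nhds 0] deriv (fun _ : ℝ => g 0) := hconst.deriv
  have h2 : deriv (deriv g) 0 = 0 := by
    rw [h1.deriv_eq]; simp
  rw [hd, hh.deriv] at h2
  linarith

lemma aux_line (f : (Fin 3 → ℝ) → ℝ) (hf : Differentiable ℝ f) (p : Fin 3 → ℝ) (i : Fin 3)
    (t : ℝ) : HasDerivAt (fun t : ℝ => f (p + t • Pi.single i 1))
      (pd i f (p + t • Pi.single i 1)) t := by
  have h1 : HasDerivAt (fun t : ℝ => p + t • (Pi.single i 1 : Fin 3 → ℝ)) (Pi.single i 1) t := by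
    simpa using ((hasDerivAt_id t).smul_const (Pi.single i 1 : Fin 3 → ℝ)).const_add p
  exact (hf _).hasFDerivAt.comp_hasDerivAt t h1

lemma aux_dir (f A : (Fin 3 → ℝ) → ℝ) (hf : Differentiable ℝ f) (hA : Differentiable ℝ A)
    (p : Fin 3 → ℝ) (i : Fin 3) (hi : i ≠ 0) (a : ℝ)
    (hd : ∀ q : Fin 3 → ℝ, q 0 = p 0 → pd i f q = a * A q)
    (hmax : ∀ q : Fin 3 → ℝ, q 0 = p 0 → f q ≤ f p) : a * pd i A p ≤ 0 := by
  have h0 : ∀ t : ℝ, (p + t • (Pi.single i 1 : Fin 3 → ℝ)) 0 = p 0 := by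
    intro t; simp [Pi.single_apply, hi.symm]
  refine aux_second (fun t : ℝ => f (p + t • Pi.single i 1))
    (fun t : ℝ => a * A (p + t • Pi.single i 1)) _ ?_ ?_ ?_
  · intro t
    have := aux_line f hf p i t
    rwa [hd _ (h0 t)] at this
  · have := (aux_line A hA p i 0).const_mul a
    simpa using this
  · intro t
    have := hmax _ (h0 t)
    simpa using this

lemma aux_max (f : (Fin 3 → ℝ) → ℝ) (hf : Continuous f) (hp : PerYZ f) (x : ℝ) :
    ∃ p : Fin 3 → ℝ, p 0 = x ∧ ∀ q : Fin 3 → ℝ, q 0 = x → f q ≤ f p := by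
  let F : ℝ × ℝ → ℝ := fun u => f ![x, u.1, u.2]
  have hF : Continuous F := by
    apply hf.comp
    refine continuous_pi fun i => ?_
    fin_cases i <;> simp <;> fun_prop
  have hK : IsCompact (Set.Icc (0:ℝ) 1 ×ˢ Set.Icc (0:ℝ) 1) := isCompact_Icc.prod isCompact_Icc
  obtain ⟨u, hu, hmax⟩ := hK.exists_isMaxOn ⟨(0, 0), by simp⟩ hF.continuousOn
  refine ⟨![x, u.1, u.2], by simp, ?_⟩
  intro q hq
  have per1 : ∀ z, Function.Periodic (fun y => F (y, z)) 1 := by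
    intro z y
    have := (hp ![x, y, z]).1
    have e : ![x, y, z] + Pi.single 1 1 = ![x, y + 1, z] := by
      ext i; fin_cases i <;> simp
    rw [e] at this
    exact this
  have per2 : ∀ y, Function.Periodic (fun z => F (y, z)) 1 := by
    intro y z
    have := (hp ![x, y, z]).2
    have e : ![x, y, z] + Pi.single 2 1 = ![x, y, z + 1] := by
      ext i; fin_cases i <;> simp
    rw [e] at this
    exact this
  obtain ⟨y, hy, ey⟩ := (per1 (q 2)).exists_mem_Ico₀ one_pos (q 1)
  obtain ⟨z, hz, ez⟩ := (per2 y).exists_mem_Ico₀ one_pos (q 2)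
  have eq : f q = F (q 1, q 2) := by
    show f q = f _
    congr 1
    ext i; fin_cases i <;> simp [hq]
  have h3 := hmax (show (y, z) ∈ _ from ⟨⟨hy.1, hy.2.le⟩, ⟨hz.1, hz.2.le⟩⟩)
  rw [eq]
  calc F (q 1, q 2) = F (y, q 2) := ey
    _ = F (y, z) := ez
    _ ≤ _ := h3

lemma aux_le (f A B : (Fin 3 → ℝ) → ℝ) (hf : Differentiable ℝ f) (hA : Differentiable ℝ A)
    (hB : Differentiable ℝ B) (hp : PerYZ f) (x a b c : ℝ) (hc : 0 < c)
    (h1 : ∀ q : Fin 3 → ℝ, q 0 = x → pd 1 f q = a * A q)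
    (h2 : ∀ q : Fin 3 → ℝ, q 0 = x → pd 2 f q = b * B q)
    (h3 : ∀ q : Fin 3 → ℝ, q 0 = x → c * f q = a * pd 1 A q + b * pd 2 B q) :
    ∀ q : Fin 3 → ℝ, q 0 = x → f q ≤ 0 := by
  obtain ⟨p, rfl, hmax⟩ := aux_max f hf.continuous hp x
  have e1 := aux_dir f A hf hA p 1 (by decide) a h1 hmax
  have e2 := aux_dir f B hf hB p 2 (by decide) b h2 hmax
  have e3 := h3 p rfl
  have : f p ≤ 0 := by
    by_contra hcon
    push Not at hcon
    have := mul_pos hc hcon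
    linarith
  intro q hq
  exact (hmax q hq).trans this

lemma pd_neg_aux (i : Fin 3) (f : (Fin 3 → ℝ) → ℝ) (q : Fin 3 → ℝ) :
    pd i (-f) q = - pd i f q := by
  simp [pd, fderiv_neg]

lemma aux_zero (f A B : (Fin 3 → ℝ) → ℝ) (hf : Differentiable ℝ f) (hA : Differentiable ℝ A)
    (hB : Differentiable ℝ B) (hp : PerYZ f) (x a b c : ℝ) (hc : 0 < c)
    (h1 : ∀ q : Fin 3 → ℝ, q 0 = x → pd 1 f q = a * A q)
    (h2 : ∀ q : Fin 3 → ℝ, q 0 = x → pd 2 f q = b * B q)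
    (h3 : ∀ q : Fin 3 → ℝ, q 0 = x → c * f q = a * pd 1 A q + b * pd 2 B q) :
    ∀ q : Fin 3 → ℝ, q 0 = x → f q = 0 ∧ pd 1 f q = 0 ∧ pd 2 f q = 0 := by
  have key : ∀ q : Fin 3 → ℝ, q 0 = x → f q = 0 := by
    intro q hq
    refine le_antisymm (aux_le f A B hf hA hB hp x a b c hc h1 h2 h3 q hq) ?_
    have := aux_le (-f) A B hf.neg hA hB (fun p => by simpa using hp p) x (-a) (-b) c hc
      (fun q hq => by rw [pd_neg_aux, h1 q hq]; ring)
      (fun q hq => by rw [pd_neg_aux, h2 q hq]; ring)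
      (fun q hq => by have := h3 q hq; simp only [Pi.neg_apply]; linarith) q hq
    simpa using this
  intro q hq
  have hz : ∀ i : Fin 3, i ≠ 0 → pd i f q = 0 := by
    intro i hi
    have h := aux_line f hf q i 0
    have e : (fun t : ℝ => f (q + t • Pi.single i 1)) = fun _ => 0 := by
      funext t
      exact key _ (by simp [Pi.single_apply, hi.symm, hq])
    rw [e] at h
    have := h.unique (hasDerivAt_const (0:ℝ) (0:ℝ))
    simpa using this
  exact ⟨key q hq, hz 1 (by decide), hz 2 (by decide)⟩

/-- If the smooth periodic vector fields `P, Q` satisfy on `[0,1] × ℝ²`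
the tangential system `λQ₁ = -(∂₂P₃ - ∂₃P₂)`, `λQ₂ = -½∂₃P₁`, `λQ₃ = ½∂₂P₁`,
`λP₁ = ∂₂Q₃ - ∂₃Q₂`, `λP₂ = ½∂₃Q₁`, `λP₃ = -½∂₂Q₁`, with `λ > 0`, then `P` and `Q`
vanish identically on `[0,1] × ℝ²`. -/
theorem stmt16 (lam : ℝ) (hlam : 0 < lam)
    (P Q : Fin 3 → (Fin 3 → ℝ) → ℝ)
    (hPs : ∀ i, ContDiff ℝ (⊤ : ℕ∞) (P i)) (hQs : ∀ i, ContDiff ℝ (⊤ : ℕ∞) (Q i))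
    (hPp : ∀ i, PerYZ (P i)) (hQp : ∀ i, PerYZ (Q i))
    (hsys : ∀ p : Fin 3 → ℝ, p 0 ∈ Set.Icc (0 : ℝ) 1 →
      lam * Q 0 p = -(pd 1 (P 2) p - pd 2 (P 1) p) ∧
      lam * Q 1 p = -(1 / 2) * pd 2 (P 0) p ∧
      lam * Q 2 p = (1 / 2) * pd 1 (P 0) p ∧
      lam * P 0 p = pd 1 (Q 2) p - pd 2 (Q 1) p ∧
      lam * P 1 p = (1 / 2) * pd 2 (Q 0) p ∧
      lam * P 2 p = -(1 / 2) * pd 1 (Q 0) p) :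
    ∀ p : Fin 3 → ℝ, p 0 ∈ Set.Icc (0 : ℝ) 1 → ∀ i, P i p = 0 ∧ Q i p = 0 := by
  intro p hp
  have dP : ∀ i, Differentiable ℝ (P i) := fun i => (hPs i).differentiable (by simp)
  have dQ : ∀ i, Differentiable ℝ (Q i) := fun i => (hQs i).differentiable (by simp)
  have hs := fun (q : Fin 3 → ℝ) (hq : q 0 = p 0) => hsys q (hq ▸ hp)
  have hc : 0 < 2 * lam * lam := by positivity
  obtain ⟨a0, a1, a2⟩ := aux_zero (P 0) (Q 2) (Q 1) (dP 0) (dQ 2) (dQ 1) (hPp 0) (p 0)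
    (2 * lam) (-(2 * lam)) (2 * lam * lam) hc
    (fun q hq => by linarith [(hs q hq).2.2.1])
    (fun q hq => by linarith [(hs q hq).2.1])
    (fun q hq => by linear_combination (2 * lam) * (hs q hq).2.2.2.1) p rfl
  obtain ⟨b0, b1, b2⟩ := aux_zero (Q 0) (P 2) (P 1) (dQ 0) (dP 2) (dP 1) (hQp 0) (p 0)
    (-(2 * lam)) (2 * lam) (2 * lam * lam) hc
    (fun q hq => by linarith [(hs q hq).2.2.2.2.2])
    (fun q hq => by linarith [(hs q hq).2.2.2.2.1])
    (fun q hq => by linear_combination (2 * lam) * (hs q hq).1) p rfl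
  obtain ⟨-, s1, s2, -, s4, s5⟩ := hs p rfl
  rw [a2] at s1
  rw [a1] at s2
  rw [b2] at s4
  rw [b1] at s5
  have hne := hlam.ne'
  simp only [mul_zero, mul_eq_zero, hne, false_or] at s1 s2 s4 s5
  intro i
  fin_cases i
  · exact ⟨a0, b0⟩
  · exact ⟨s4, s1⟩
  · exact ⟨s5, s2⟩
end
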